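/- For every integer α with 16 ≤ α ≤ 20 and every nonnegative integer N, the equation x² + 2y² + αz² + 5(3t² − 2t) + 5(3s² − 2s) + 5(3u² − 2u) = N has an integer solution (x, y, z, t, s, u) ∈ ℤ⁶; and for every β with β = 5 or 16 ≤ β ≤ 20 and every nonnegative integer N, the equation x² + 2y² + 5(3z² − 2z) + 5(3t² − 2t) + 5(3s² − 2s) + β(3u² − 2u) = N has an integer solution in ℤ⁶. That is, the senary mixed sums x²+2y²+αz²+5P₈(t)+5P₈(s)+5P₈(u) (16 ≤ α ≤ 20) and x²+2y²+5P₈(z)+5P₈(t)+5P₈(s)+βP₈(u) (β = 5 or 16 ≤ β ≤ 20) are universal. -/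

import Mathlib

/-!
The quinary sum `x² + 2y² + 5(P₈(t) + P₈(s) + P₈(u))` represents every nonnegative integer except
`20`. Hence adding one more term `αz²` or `βP₈(z)` with nonzero coefficient at most `20` makes the
sum universal: both terms take the values `0` and `α` (resp. `β`), and `20 - α ≠ 20` is already
represented.

Since `3 P₈(t) + 1 = (3t - 1)²`, an integer `n` is a sum of three octagonal numbers as soon as
`3n + 3` is a sum of three squares prime to `3`. If `n ≢ 2 (mod 3)`, then `9 ∤ 3n + 3`, so any three
squares with that sum are prime to `3`. If moreover `n ≡ 1 (mod 4)`, then `3n + 3 ≡ 2 (mod 4)`,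
and such a number is a sum of three squares by the classical argument of Dirichlet: it is
represented by a positive definite ternary form of determinant `1`, and reduction theory shows that
every such form is equivalent to `x² + y² + z²`. Finally, `x² + 2y²` meets enough residue classes
modulo `60` to bring every `N ≥ 275` into this situation, and a finite search settles `N < 275`.
-/

/-- The integral ternary quadratic form with symmetric Gram matrix
`!![a, f, e; f, b, d; e, d, c]`. -/
structure TernaryForm where
  (a b c d e f : ℤ)

namespace TernaryForm

/-- The value of the form at an integer vector. -/
def eval (Q : TernaryForm) (x y z : ℤ) : ℤ :=
  Q.a * x ^ 2 + Q.b * y ^ 2 + Q.c * z ^ 2 + 2 * Q.d * y * z + 2 * Q.e * x * z + 2 * Q.f * x * y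

/-- The set of integers represented by the form. -/
def values (Q : TernaryForm) : Set ℤ :=
  {n | ∃ x y z, Q.eval x y z = n}

/-- The leading principal `2 × 2` minor of the Gram matrix. -/
def minor (Q : TernaryForm) : ℤ :=
  Q.a * Q.b - Q.f ^ 2

/-- The determinant of the Gram matrix. -/
def det (Q : TernaryForm) : ℤ :=
  Q.a * Q.b * Q.c + 2 * Q.d * Q.e * Q.f - Q.a * Q.d ^ 2 - Q.b * Q.e ^ 2 - Q.c * Q.f ^ 2

/-- Positive definiteness, in the form of Sylvester's criterion. -/
structure IsPosDef (Q : TernaryForm) : Prop where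
  a_pos : 0 < Q.a
  minor_pos : 0 < Q.minor
  det_pos : 0 < Q.det

/-- Hermite's inequalities, at which the descent on the leading coefficient and the leading minor
stops; they are weaker than reducedness in the sense of Gauss. -/
structure IsReduced (Q : TernaryForm) : Prop where
  three_mul_a_sq_le : 3 * Q.a ^ 2 ≤ 4 * Q.minor
  three_mul_minor_sq_le : 3 * Q.minor ^ 2 ≤ 4 * Q.a * Q.det

/-- The form `Q (y + k x, x, z)`. -/
def shearSwapXY (Q : TernaryForm) (k : ℤ) : TernaryForm where
  a := Q.b + 2 * k * Q.f + k ^ 2 * Q.a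
  b := Q.a
  c := Q.c
  d := Q.e
  e := Q.d + k * Q.e
  f := Q.f + k * Q.a

/-- The form `Q (x, z + k y, y)`. -/
def shearSwapYZ (Q : TernaryForm) (k : ℤ) : TernaryForm where
  a := Q.a
  b := Q.c + 2 * k * Q.d + k ^ 2 * Q.b
  c := Q.b
  d := Q.d + k * Q.b
  e := Q.f
  f := Q.e + k * Q.f

variable (Q : TernaryForm) (k : ℤ)

theorem minor_shearSwapXY : (Q.shearSwapXY k).minor = Q.minor := by
  simp only [minor, shearSwapXY]
  ring

theorem det_shearSwapXY : (Q.shearSwapXY k).det = Q.det := by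
  simp only [det, shearSwapXY]
  ring

theorem det_shearSwapYZ : (Q.shearSwapYZ k).det = Q.det := by
  simp only [det, shearSwapYZ]
  ring

theorem values_subset_values_shearSwapXY : Q.values ⊆ (Q.shearSwapXY k).values := by
  rintro _ ⟨x, y, z, rfl⟩
  refine ⟨y, x - k * y, z, ?_⟩
  simp only [eval, shearSwapXY]
  ring

theorem values_subset_values_shearSwapYZ : Q.values ⊆ (Q.shearSwapYZ k).values := by
  rintro _ ⟨x, y, z, rfl⟩
  refine ⟨x, z, y - k * z, ?_⟩
  simp only [eval, shearSwapYZ]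
  ring

theorem a_mul_shearSwapXY_a :
    Q.a * (Q.shearSwapXY k).a = Q.minor + (Q.f + k * Q.a) ^ 2 := by
  simp only [minor, shearSwapXY]
  ring

theorem minor_mul_shearSwapYZ_minor :
    Q.minor * (Q.shearSwapYZ k).minor =
      Q.a * Q.det + (Q.a * Q.d - Q.e * Q.f + k * Q.minor) ^ 2 := by
  simp only [minor, det, shearSwapYZ]
  ring

/-- Lagrange's completion of squares, with denominators cleared. -/
theorem a_mul_minor_mul_eval (x y z : ℤ) :
    Q.a * Q.minor * Q.eval x y z =
      Q.minor * (Q.a * x + Q.f * y + Q.e * z) ^ 2 +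
        (Q.minor * y + (Q.a * Q.d - Q.e * Q.f) * z) ^ 2 + Q.a * Q.det * z ^ 2 := by
  simp only [minor, det, eval]
  ring

end TernaryForm

theorem exists_four_mul_add_mul_sq_le (n : ℤ) {a : ℤ} (ha : 0 < a) :
    ∃ k : ℤ, 4 * (n + k * a) ^ 2 ≤ a ^ 2 := by
  have hdiv := Int.emod_add_mul_ediv (2 * n + a) (2 * a)
  have hnonneg := Int.emod_nonneg (2 * n + a) (show 2 * a ≠ 0 by lia)
  have hlt := Int.emod_lt_of_pos (2 * n + a) (show 0 < 2 * a by lia)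
  refine ⟨-((2 * n + a) / (2 * a)), ?_⟩
  have hsq : (2 * (n + -((2 * n + a) / (2 * a)) * a)) ^ 2 ≤ a ^ 2 :=
    sq_le_sq' (by linarith) (by linarith)
  linarith

theorem pos_and_lt_of_mul_eq_add_sq {a a' m r : ℤ} (ha : 0 < a) (hm : 0 < m)
    (hmul : a * a' = m + r ^ 2) (hr : 4 * r ^ 2 ≤ a ^ 2) (hlt : 4 * m < 3 * a ^ 2) :
    0 < a' ∧ a' < a := by
  constructor
  · exact pos_of_mul_pos_right (by rw [hmul]; positivity) ha.le
  · exact lt_of_mul_lt_mul_left (by linarith) ha.le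

namespace TernaryForm

variable {Q : TernaryForm}

theorem IsPosDef.exists_shearSwapXY_a_lt (hQ : Q.IsPosDef) (h : 4 * Q.minor < 3 * Q.a ^ 2) :
    ∃ k, (Q.shearSwapXY k).IsPosDef ∧ (Q.shearSwapXY k).a < Q.a := by
  obtain ⟨k, hk⟩ := exists_four_mul_add_mul_sq_le Q.f hQ.a_pos
  obtain ⟨hpos, hlt⟩ :=
    pos_and_lt_of_mul_eq_add_sq hQ.a_pos hQ.minor_pos (Q.a_mul_shearSwapXY_a k) hk h
  exact ⟨k, ⟨hpos, by rw [minor_shearSwapXY]; exact hQ.minor_pos,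
    by rw [det_shearSwapXY]; exact hQ.det_pos⟩, hlt⟩

theorem IsPosDef.exists_shearSwapYZ_minor_lt (hQ : Q.IsPosDef)
    (h : 4 * Q.a * Q.det < 3 * Q.minor ^ 2) :
    ∃ k, (Q.shearSwapYZ k).IsPosDef ∧ (Q.shearSwapYZ k).minor < Q.minor := by
  obtain ⟨k, hk⟩ := exists_four_mul_add_mul_sq_le (Q.a * Q.d - Q.e * Q.f) hQ.minor_pos
  obtain ⟨hpos, hlt⟩ :=
    pos_and_lt_of_mul_eq_add_sq hQ.minor_pos (mul_pos hQ.a_pos hQ.det_pos)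
      (Q.minor_mul_shearSwapYZ_minor k) hk (by linarith)
  exact ⟨k, ⟨hQ.a_pos, hpos, by rw [det_shearSwapYZ]; exact hQ.det_pos⟩, hlt⟩

theorem IsPosDef.exists_isReduced (hQ : Q.IsPosDef) :
    ∃ R : TernaryForm, R.IsPosDef ∧ R.IsReduced ∧ R.det = Q.det ∧ Q.values ⊆ R.values := by
  induction hsize : (Q.a + Q.minor).toNat using Nat.strong_induction_on generalizing Q with
  | _ size ih =>
    have ha := hQ.a_pos
    have hminor := hQ.minor_pos
    by_cases hXY : 4 * Q.minor < 3 * Q.a ^ 2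
    · obtain ⟨k, hpos, hlt⟩ := hQ.exists_shearSwapXY_a_lt hXY
      obtain ⟨R, hR, hred, hdet, hval⟩ := ih _ (by rw [minor_shearSwapXY]; lia) hpos rfl
      exact ⟨R, hR, hred, hdet.trans (Q.det_shearSwapXY k),
        (Q.values_subset_values_shearSwapXY k).trans hval⟩
    by_cases hYZ : 4 * Q.a * Q.det < 3 * Q.minor ^ 2
    · obtain ⟨k, hpos, hlt⟩ := hQ.exists_shearSwapYZ_minor_lt hYZ
      have ha_eq : (Q.shearSwapYZ k).a = Q.a := rfl
      obtain ⟨R, hR, hred, hdet, hval⟩ := ih _ (by lia) hpos rfl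
      exact ⟨R, hR, hred, hdet.trans (Q.det_shearSwapYZ k),
        (Q.values_subset_values_shearSwapYZ k).trans hval⟩
    exact ⟨Q, hQ, ⟨not_lt.1 hXY, not_lt.1 hYZ⟩, rfl, subset_rfl⟩

/-- Hermite's bound on the minimum of a ternary form. -/
theorem IsReduced.a_pow_three_le (hred : Q.IsReduced) (ha : 0 < Q.a) :
    27 * Q.a ^ 3 ≤ 64 * Q.det := by
  have hsq : (3 * Q.a ^ 2) ^ 2 ≤ (4 * Q.minor) ^ 2 :=
    pow_le_pow_left₀ (by positivity) hred.three_mul_a_sq_le 2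
  have hmul : Q.a * (27 * Q.a ^ 3) ≤ Q.a * (64 * Q.det) := by
    linarith [hred.three_mul_minor_sq_le]
  exact le_of_mul_le_mul_left hmul ha

theorem IsReduced.a_eq_one_and_minor_eq_one (hred : Q.IsReduced) (hQ : Q.IsPosDef)
    (hdet : Q.det = 1) : Q.a = 1 ∧ Q.minor = 1 := by
  have ha := hQ.a_pos
  have hminor := hQ.minor_pos
  have hHermite := hred.a_pow_three_le ha
  have hminor_sq := hred.three_mul_minor_sq_le
  have ha_one : Q.a = 1 := by
    by_contra hne
    have : 2 ^ 3 ≤ Q.a ^ 3 := pow_le_pow_left₀ (by norm_num) (by lia) 3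
    lia
  rw [hdet, ha_one] at hminor_sq
  exact ⟨ha_one, by nlinarith⟩

theorem IsPosDef.exists_sum_three_sq_of_det_eq_one (hQ : Q.IsPosDef) (hdet : Q.det = 1) {n : ℤ}
    (hn : n ∈ Q.values) : ∃ p q r : ℤ, p ^ 2 + q ^ 2 + r ^ 2 = n := by
  obtain ⟨R, hR, hred, hRdet, hval⟩ := hQ.exists_isReduced
  obtain ⟨x, y, z, rfl⟩ := hval hn
  obtain ⟨ha, hminor⟩ := hred.a_eq_one_and_minor_eq_one hR (hRdet.trans hdet)
  have hsquares := R.a_mul_minor_mul_eval x y z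
  simp only [hRdet, hdet, hminor, ha, one_mul] at hsquares
  exact ⟨_, _, _, hsquares.symm⟩

end TernaryForm

theorem exists_sum_three_sq_of_dvd_sq_add {m d p t : ℤ} (hd : 0 < d) (hp : 0 < p)
    (hpm : p + 1 = d * m) (hdvd : p ∣ t ^ 2 + d) :
    ∃ x y z : ℤ, x ^ 2 + y ^ 2 + z ^ 2 = m := by
  obtain ⟨a, ha⟩ := hdvd
  let Q : TernaryForm := { a := a, b := p, c := m, d := 0, e := 1, f := t }
  have hminor : Q.minor = d := by
    simp only [TernaryForm.minor, Q]
    linarith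
  have hdet : Q.det = 1 := by
    simp only [TernaryForm.det, Q]
    linear_combination -m * ha - hpm
  have ha_pos : 0 < a := pos_of_mul_pos_right (by rw [← ha]; positivity) hp.le
  have hQ : Q.IsPosDef := ⟨ha_pos, hminor ▸ hd, hdet ▸ one_pos⟩
  exact hQ.exists_sum_three_sq_of_det_eq_one hdet ⟨0, 0, 1, by simp [TernaryForm.eval, Q]⟩

theorem isSquare_neg_of_dvd_add_one {p d : ℕ} [Fact p.Prime] (hp : p % 4 = 1) (hd : d % 4 = 1)
    (hdvd : d ∣ p + 1) : IsSquare ((-d : ℤ) : ZMod p) := by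
  have hp_odd : Odd p := Nat.odd_iff.2 (by lia)
  have hd_odd : Odd d := Nat.odd_iff.2 (by lia)
  have hmod : -1 ≡ (p : ℤ) [ZMOD d] :=
    Int.modEq_iff_dvd.2 (by rw [sub_neg_eq_add]; exact_mod_cast hdvd)
  apply ZMod.isSquare_of_jacobiSym_eq_one
  calc jacobiSym (-d) p = jacobiSym d p := by
        rw [jacobiSym.neg _ hp_odd, ZMod.χ₄_nat_one_mod_four hp, one_mul]
    _ = jacobiSym p d := jacobiSym.quadratic_reciprocity_one_mod_four hd hp_odd
    _ = jacobiSym (-1) d := jacobiSym.mod_left' hmod.symm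
    _ = 1 := by rw [jacobiSym.at_neg_one hd_odd, ZMod.χ₄_nat_one_mod_four hd]

theorem exists_prime_add_one_eq_mul {m : ℕ} (hm : m % 4 = 2) :
    ∃ p d : ℕ, p.Prime ∧ d % 4 = 1 ∧ p + 1 = d * m := by
  have hcoprime : (m - 1).Coprime (4 * m) := by
    refine Nat.Coprime.mul_right ?_ ?_
    · exact Nat.Coprime.pow_right 2 (Nat.coprime_two_right.2 (Nat.odd_iff.2 (by lia)))
    · exact (Nat.coprime_self_sub_left (by lia)).2 (Nat.coprime_one_left m)
  obtain ⟨p, hlt, hp, hmod⟩ :=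
    Nat.forall_exists_prime_gt_and_modEq m (q := 4 * m) (by lia) hcoprime
  obtain ⟨v, hv⟩ := (Nat.modEq_iff_dvd' (by lia)).1 hmod.symm
  exact ⟨p, 4 * v + 1, hp, by lia, by lia⟩

theorem exists_sum_three_sq_of_mod_four_eq_two {m : ℕ} (hm : m % 4 = 2) :
    ∃ x y z : ℤ, x ^ 2 + y ^ 2 + z ^ 2 = m := by
  obtain ⟨p, d, hp, hd, hpm⟩ := exists_prime_add_one_eq_mul hm
  have : Fact p.Prime := ⟨hp⟩
  have hp_mod : p % 4 = 1 := by
    have := Nat.mul_mod d m 4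
    rw [hd, hm] at this
    lia
  obtain ⟨w, hw⟩ := isSquare_neg_of_dvd_add_one hp_mod hd ⟨m, hpm⟩
  obtain ⟨t, rfl⟩ := ZMod.intCast_surjective w
  have hdvd : (p : ℤ) ∣ t ^ 2 + d := by
    rw [← ZMod.intCast_zmod_eq_zero_iff_dvd]
    push_cast at hw ⊢
    linear_combination -hw
  exact exists_sum_three_sq_of_dvd_sq_add (by lia) (mod_cast hp.pos) (mod_cast hpm) hdvd

/-- The generalized octagonal number `P₈(x)`. -/
def octagonal (x : ℤ) : ℤ :=
  3 * x ^ 2 - 2 * x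

theorem exists_three_mul_octagonal_add_one_eq_sq {a : ℤ} (ha : ¬3 ∣ a) :
    ∃ t, 3 * octagonal t + 1 = a ^ 2 := by
  obtain ⟨t, rfl | rfl⟩ : ∃ t, a = 3 * t - 1 ∨ a = -(3 * t - 1) :=
    (show 3 ∣ a + 1 ∨ 3 ∣ 1 - a by lia).elim (fun ⟨t, ht⟩ ↦ ⟨t, .inl (by lia)⟩)
      (fun ⟨t, ht⟩ ↦ ⟨t, .inr (by lia)⟩)
  all_goals exact ⟨t, by rw [octagonal]; ring⟩

theorem not_three_dvd_of_sum_three_sq {a b c : ℤ} (h3 : 3 ∣ a ^ 2 + b ^ 2 + c ^ 2)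
    (h9 : ¬9 ∣ a ^ 2 + b ^ 2 + c ^ 2) : ¬3 ∣ a ∧ ¬3 ∣ b ∧ ¬3 ∣ c := by
  have sq_mod (w : ℤ) : 3 ∣ w ∧ 9 ∣ w ^ 2 ∨ ¬3 ∣ w ∧ w ^ 2 % 3 = 1 := by
    by_cases hw : 3 ∣ w
    · exact .inl ⟨hw, pow_dvd_pow_of_dvd hw 2⟩
    · obtain ⟨t, ht⟩ := exists_three_mul_octagonal_add_one_eq_sq hw
      exact .inr ⟨hw, by lia⟩
  have ha := sq_mod a
  have hb := sq_mod b
  have hc := sq_mod c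
  lia

theorem exists_sum_three_octagonal {n : ℤ} (hn : 0 ≤ n) (h4 : n % 4 = 1) (h3 : n % 3 ≠ 2) :
    ∃ t s u, octagonal t + octagonal s + octagonal u = n := by
  lift n to ℕ using hn
  obtain ⟨a, b, c, habc⟩ := exists_sum_three_sq_of_mod_four_eq_two (m := 3 * n + 3) (by lia)
  push_cast at habc
  obtain ⟨ha, hb, hc⟩ : ¬3 ∣ a ∧ ¬3 ∣ b ∧ ¬3 ∣ c :=
    not_three_dvd_of_sum_three_sq (by lia) (by lia)
  obtain ⟨t, ht⟩ := exists_three_mul_octagonal_add_one_eq_sq ha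
  obtain ⟨s, hs⟩ := exists_three_mul_octagonal_add_one_eq_sq hb
  obtain ⟨u, hu⟩ := exists_three_mul_octagonal_add_one_eq_sq hc
  exact ⟨t, s, u, by linarith⟩

theorem exists_sum_three_octagonal_of_lt_fifteen : ∀ n : ℕ, n < 15 → n ≠ 4 → n ≠ 12 →
    ∃ t ∈ Finset.Icc (-1) 2, ∃ s ∈ Finset.Icc (-1) 2, ∃ u ∈ Finset.Icc (-1) 2,
      octagonal t + octagonal s + octagonal u = n := by
  decide +kernel

-- The residues `5` and `45` are those of `5n` with `n ≡ 1 (mod 4)` and `n ≢ 2 (mod 3)`.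
theorem exists_sq_add_two_mul_sq_residue : ∀ r < 60, ∃ x < 16, ∃ y < 11,
    x ^ 2 + 2 * y ^ 2 ≤ 275 ∧
      ((x ^ 2 + 2 * y ^ 2 + 5) % 60 = r ∨ (x ^ 2 + 2 * y ^ 2 + 45) % 60 = r) := by
  decide +kernel

theorem exists_sq_add_two_mul_sq_add_five_mul_of_ge {N : ℤ} (hN : 275 ≤ N) :
    ∃ x y n : ℤ, 0 ≤ n ∧ n % 4 = 1 ∧ n % 3 ≠ 2 ∧ x ^ 2 + 2 * y ^ 2 + 5 * n = N := by
  lift N to ℕ using by lia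
  obtain ⟨x, -, y, -, hle, hmod⟩ :=
    exists_sq_add_two_mul_sq_residue (N % 60) (Nat.mod_lt _ (by norm_num))
  refine ⟨x, y, (N - (x ^ 2 + 2 * y ^ 2)) / 5, ?_⟩
  lia

theorem exists_sq_add_two_mul_sq_add_five_mul_of_lt : ∀ N < 275, N ≠ 20 →
    ∃ n < 15, n ≠ 4 ∧ n ≠ 12 ∧ ∃ y < 12, ∃ x < 17, x ^ 2 + 2 * y ^ 2 + 5 * n = N := by
  decide +kernel

/-- The integers represented by the quinary sum `x² + 2y² + 5P₈(t) + 5P₈(s) + 5P₈(u)` common to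
all the senary sums under consideration. -/
def quinaryValues : Set ℤ :=
  {N | ∃ x y t s u : ℤ,
    x ^ 2 + 2 * y ^ 2 + 5 * octagonal t + 5 * octagonal s + 5 * octagonal u = N}

theorem mem_quinaryValues_of_ge {N : ℤ} (hN : 275 ≤ N) : N ∈ quinaryValues := by
  obtain ⟨x, y, n, hn, h4, h3, h⟩ := exists_sq_add_two_mul_sq_add_five_mul_of_ge hN
  obtain ⟨t, s, u, rfl⟩ := exists_sum_three_octagonal hn h4 h3
  exact ⟨x, y, t, s, u, by linarith⟩

theorem mem_quinaryValues_of_lt {N : ℕ} (hN : N < 275) (hN20 : N ≠ 20) :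
    (N : ℤ) ∈ quinaryValues := by
  obtain ⟨n, hn, hn4, hn12, y, -, x, -, rfl⟩ :=
    exists_sq_add_two_mul_sq_add_five_mul_of_lt N hN hN20
  obtain ⟨t, -, s, -, u, -, h⟩ := exists_sum_three_octagonal_of_lt_fifteen n hn hn4 hn12
  exact ⟨x, y, t, s, u, by push_cast; linarith⟩

theorem mem_quinaryValues_of_ne_twenty {N : ℤ} (hN : 0 ≤ N) (hN20 : N ≠ 20) :
    N ∈ quinaryValues := by
  rcases lt_or_ge N 275 with hlt | hge
  · lift N to ℕ using hN
    exact mem_quinaryValues_of_lt (by lia) (by lia)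
  · exact mem_quinaryValues_of_ge hge

theorem exists_mem_quinaryValues_add_mul {γ N : ℤ} (hγ : γ ≠ 0) (hγ20 : γ ≤ 20) (hN : 0 ≤ N) :
    ∃ n ∈ quinaryValues, ∃ ε, (ε = 0 ∨ ε = 1) ∧ n + γ * ε = N := by
  by_cases hN20 : N = 20
  · exact ⟨20 - γ, mem_quinaryValues_of_ne_twenty (by lia) (by lia), 1, .inr rfl, by linarith⟩
  · exact ⟨N, mem_quinaryValues_of_ne_twenty hN hN20, 0, .inl rfl, by ring⟩

theorem universal_case_6_1_general {γ N : ℤ} (hγ : γ ≠ 0) (hγ20 : γ ≤ 20) (hN : 0 ≤ N) :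
    (∃ x y z t s u : ℤ,
      x ^ 2 + 2 * y ^ 2 + γ * z ^ 2 + 5 * octagonal t + 5 * octagonal s + 5 * octagonal u = N) ∧
    (∃ x y z t s u : ℤ,
      x ^ 2 + 2 * y ^ 2 + 5 * octagonal z + 5 * octagonal t + 5 * octagonal s +
        γ * octagonal u = N) := by
  obtain ⟨n, ⟨x, y, t, s, u, hn⟩, ε, hε, h⟩ := exists_mem_quinaryValues_add_mul hγ hγ20 hN
  have hsq : ε ^ 2 = ε := by rcases hε with rfl | rfl <;> rfl
  have hoct : octagonal ε = ε := by rw [octagonal, hsq]; ring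
  exact ⟨⟨x, y, ε, t, s, u, by rw [hsq]; linarith⟩, ⟨x, y, t, s, u, ε, by rw [hoct]; linarith⟩⟩

theorem universal_case_6_1 :
    (∀ α : ℤ, 16 ≤ α → α ≤ 20 → ∀ N : ℤ, 0 ≤ N →
      ∃ x y z t s u : ℤ,
        x ^ 2 + 2 * y ^ 2 + α * z ^ 2 + 5 * (3 * t ^ 2 - 2 * t) +
          5 * (3 * s ^ 2 - 2 * s) + 5 * (3 * u ^ 2 - 2 * u) = N) ∧
    (∀ β : ℤ, β = 5 ∨ (16 ≤ β ∧ β ≤ 20) → ∀ N : ℤ, 0 ≤ N →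
      ∃ x y z t s u : ℤ,
        x ^ 2 + 2 * y ^ 2 + 5 * (3 * z ^ 2 - 2 * z) + 5 * (3 * t ^ 2 - 2 * t) +
          5 * (3 * s ^ 2 - 2 * s) + β * (3 * u ^ 2 - 2 * u) = N) :=
  ⟨fun _ _ _ _ hN ↦ (universal_case_6_1_general (by lia) (by lia) hN).1,
    fun _ _ _ hN ↦ (universal_case_6_1_general (by lia) (by lia) hN).2⟩
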